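/- Let Σ = σ² × Σ_1 ⊗ ⋯ ⊗ Σ_v with Σ_j of size n_j × n_j, and for 2 ≤ h ≤ v define Σ^{(h)} := K_{n_h⋯n_v, n_1⋯n_{h-1}} Σ K_{n_1⋯n_{h-1}, n_h⋯n_v}, where K_{m,p} denotes the mp × mp commutation matrix (the unique matrix satisfying K_{m,p} vec(A) = vec(Aᵀ) for every m × p matrix A). Then Σ^{(h)} = σ² × Σ_h ⊗ Σ_{h+1} ⊗ ⋯ ⊗ Σ_v ⊗ Σ_1 ⊗ ⋯ ⊗ Σ_{h-1} = σ² × Σ_h ⊗ Σ_{-h}, and consequently, with d^{(h)} := PTR_{n_h}(Σ^{(h)}) = σ² tr(Σ_{-h}) Σ_h, one has Σ_h = d^{(h)} / (tr(d^{(h)})/n_h), i.e., every factor Σ_h is identified from Σ. -/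

import Mathlib

open Matrix
open Kronecker

/-- The partial trace operator `PTR_m : ℝ^{mp×mp} → ℝ^{m×m}`: viewing a matrix
indexed by `m × p` as an `m × m` array of `p × p` blocks, it returns the matrix
of block traces. -/
noncomputable def PTR {m p : Type*} [Fintype p]
    (A : Matrix (m × p) (m × p) ℝ) : Matrix m m ℝ :=
  fun i j => ∑ ℓ : p, A (i, ℓ) (j, ℓ)

/-- `K` is the commutation matrix `K_{m,p}`: the (unique) `mp × mp` matrix
with `K ⬝ vec M = vec Mᵀ` for every `m × p` matrix `M`, where `vec` stacks the
columns of a matrix (so `vec M` is indexed by pairs (column, row)). -/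
def IsCommutationMatrix {m p : Type*} [Fintype m] [Fintype p]
    (K : Matrix (m × p) (p × m) ℝ) : Prop :=
  ∀ M : Matrix m p ℝ, K.mulVec (fun y => M y.2 y.1) = fun x => M x.1 x.2

theorem IsCommutationMatrix.apply_eq {m p : Type*} [Fintype m] [Fintype p]
    [DecidableEq m] [DecidableEq p]
    {K : Matrix (m × p) (p × m) ℝ} (h : IsCommutationMatrix K) (x : m × p) (y : p × m) :
    K x y = if y = x.swap then 1 else 0 := by
  have h1 := congrFun (h (fun i j => if (j, i) = y then 1 else 0)) x
  simp only [Matrix.mulVec, dotProduct, Prod.mk.eta, mul_ite, mul_one, mul_zero,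
    Finset.sum_ite_eq', Finset.mem_univ, if_true] at h1
  rw [h1]
  simp only [Prod.swap, eq_comm]

theorem PTR_smul_kronecker {m p : Type*} [Fintype p] (s : ℝ)
    (S : Matrix m m ℝ) (B : Matrix p p ℝ) :
    PTR (s • (S ⊗ₖ B)) = (s * B.trace) • S := by
  ext i j
  simp only [PTR, Matrix.smul_apply, Matrix.kroneckerMap_apply, smul_eq_mul, Matrix.trace,
    Matrix.diag_apply, Finset.mul_sum, Finset.sum_mul]
  exact Finset.sum_congr rfl fun _ _ => by ring

/-- Write `Σ = σ² • (A ⊗ (Σ_h ⊗ Q))` where `A` collects the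
Kronecker factors before position `h` (size `a`) and `Q` those after it
(size `c`), and let `Σ^{(h)} := K_{n_h c, a} Σ K_{a, n_h c}` with the
commutation matrices.  Then, after reassociating the Kronecker indices,
`Σ^{(h)} = σ² • (Σ_h ⊗ (Q ⊗ A)) = σ² • (Σ_h ⊗ Σ₋h)`; consequently, with
`d⁽ʰ⁾ := PTR_{n_h}(Σ^{(h)}) = σ² tr(Σ₋h) • Σ_h`, one has
`Σ_h = d⁽ʰ⁾ / (tr d⁽ʰ⁾ / n_h)`, i.e. every factor `Σ_h` is identified from
`Σ`. -/
theorem commutation_conjugation_and_identification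
    (a nh c : ℕ) (ha : 0 < a) (hnh : 0 < nh) (hc : 0 < c) (σ2 : ℝ) (hσ2 : 0 < σ2)
    (A : Matrix (Fin a) (Fin a) ℝ)
    (Sigh : Matrix (Fin nh) (Fin nh) ℝ)
    (Q : Matrix (Fin c) (Fin c) ℝ)
    (htrA : A.trace = (a : ℝ)) (htrSigh : Sigh.trace = (nh : ℝ))
    (htrQ : Q.trace = (c : ℝ))
    (Kba : Matrix ((Fin nh × Fin c) × Fin a) (Fin a × (Fin nh × Fin c)) ℝ)
    (Kab : Matrix (Fin a × (Fin nh × Fin c)) ((Fin nh × Fin c) × Fin a) ℝ)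
    (hKba : IsCommutationMatrix Kba) (hKab : IsCommutationMatrix Kab) :
    Matrix.reindex (Equiv.prodAssoc (Fin nh) (Fin c) (Fin a))
        (Equiv.prodAssoc (Fin nh) (Fin c) (Fin a))
        (Kba * (σ2 • (A ⊗ₖ (Sigh ⊗ₖ Q))) * Kab)
      = σ2 • (Sigh ⊗ₖ (Q ⊗ₖ A)) ∧
    PTR (σ2 • (Sigh ⊗ₖ (Q ⊗ₖ A))) = (σ2 * (Q ⊗ₖ A).trace) • Sigh ∧
    Sigh = ((PTR (σ2 • (Sigh ⊗ₖ (Q ⊗ₖ A)))).trace / (nh : ℝ))⁻¹ •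
        PTR (σ2 • (Sigh ⊗ₖ (Q ⊗ₖ A))) := by
  refine ⟨?_, PTR_smul_kronecker _ _ _, ?_⟩
  · ext ⟨i, k, l⟩ ⟨i', k', l'⟩
    simp only [Matrix.reindex_apply, Matrix.submatrix_apply, Equiv.prodAssoc_symm_apply,
      Matrix.mul_apply, hKba.apply_eq, hKab.apply_eq, ite_mul, one_mul, zero_mul,
      Finset.sum_ite_eq', Finset.mem_univ, if_true]
    rw [Finset.sum_eq_single (l', (i', k'))]
    · simp [Matrix.kroneckerMap_apply]
      ring_nf
      simp
    · rintro ⟨b, d, e⟩ - hne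
      rw [if_neg, mul_zero]
      intro h
      apply hne
      simp_all [Prod.ext_iff]
    · simp
  · have ha' : (a : ℝ) ≠ 0 := by positivity
    have hn' : (nh : ℝ) ≠ 0 := by positivity
    have hc' : (c : ℝ) ≠ 0 := by positivity
    rw [PTR_smul_kronecker, Matrix.trace_smul, htrSigh, Matrix.trace_kronecker, htrQ, htrA,
      smul_smul, smul_eq_mul, mul_div_assoc, div_self hn', mul_one, inv_mul_cancel₀, one_smul]
    positivity
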